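/- Let f be a smooth nonnegative function on ℝⁿ × (0,1] with ∂ₜ f ≤ Δ f pointwise, with f(·,t) → 0 in L²_loc(ℝⁿ) as t → 0⁺, and such that ∫₀¹ ∫_{B(0,r)} f² dx dt < ∞ and sup_{0<s<1} ∫_{B(0,r)} f(x,s)² dx < ∞ for every r > 0. Then for every R > 0 and every real m ≥ 2, ∫_{B(0,R)} f(x,t)² dx = o(tᵐ) as t → 0⁺; in particular lim_{t→0⁺} (1/t) ∫_{B(0,R)} f(x,t)² dx = 0. -/

import Mathlib

/-!
Since `f ≥ 0`, multiplying `∂ₜ f ≤ Δ f` by `2 f` gives `∂ₜ (f²) ≤ 2 f Δ f ≤ Δ (f²)`. Pairing with a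
cutoff `φ` and moving the Laplacian onto `φ`, the weighted energy `∫ φ f²` has time derivative at
most `∫ (Δ φ) f²`, which is controlled by `∫ f²` over a slightly larger ball. As the energy tends
to `0` at time `0`, a bound `O(tᵏ)` for the larger ball integrates to `O(tᵏ⁺¹)` for the smaller
one, and iterating yields every order of vanishing.
-/

open MeasureTheory Filter Set Metric Asymptotics

/-- The Euclidean Laplacian of `g : ℝⁿ → ℝ`. -/
noncomputable def heatLap {n : ℕ} (g : EuclideanSpace ℝ (Fin n) → ℝ)
    (x : EuclideanSpace ℝ (Fin n)) : ℝ :=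
  ∑ i : Fin n, fderiv ℝ (fun y => fderiv ℝ g y (EuclideanSpace.single i (1 : ℝ))) x
    (EuclideanSpace.single i (1 : ℝ))

section ParametricIntegral

variable {X 𝕜 G : Type*} [TopologicalSpace X] [T2Space X] [MeasurableSpace X]
  [OpensMeasurableSpace X] [RCLike 𝕜] [NormedAddCommGroup G] [NormedSpace ℝ G] [NormedSpace 𝕜 G]

theorem hasDerivAt_integral_of_eq_zero_off_compact {μ : Measure X} [IsFiniteMeasureOnCompacts μ]
    {U : Set 𝕜} (hU : IsOpen U) {K : Set X} (hK : IsCompact K) {F F' : 𝕜 → X → G}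
    (hF : ∀ s ∈ U, Continuous (F s)) (hF' : ContinuousOn (Function.uncurry F') (U ×ˢ univ))
    (hderiv : ∀ s ∈ U, ∀ x, HasDerivAt (F · x) (F' s x) s)
    (hzero : ∀ s ∈ U, ∀ x ∉ K, F s x = 0) {t : 𝕜} (ht : t ∈ U) :
    HasDerivAt (fun s => ∫ x, F s x ∂μ) (∫ x, F' t x ∂μ) t := by
  have integrable_of_zero {g : X → G} (hg : Continuous g) (hgK : ∀ x ∉ K, g x = 0) :
      Integrable g μ := hg.integrable_of_hasCompactSupport (.intro hK hgK)
  have hzero' : ∀ s ∈ U, ∀ x ∉ K, F' s x = 0 := fun s hs x hx =>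
    (hderiv s hs x).unique <| (hasDerivAt_const s 0).congr_of_eventuallyEq <|
      (hU.eventually_mem hs).mono fun r hr => hzero r hr x hx
  obtain ⟨ε, hε, hεU⟩ := nhds_basis_closedBall.mem_iff.1 (hU.mem_nhds ht)
  obtain ⟨C, hC⟩ := ((isCompact_closedBall t ε).prod hK).exists_bound_of_continuousOn
    (hF'.mono (prod_mono hεU (subset_univ _)))
  refine (hasDerivAt_integral_of_dominated_loc_of_deriv_le (F' := F')
    (bound := K.indicator fun _ => C) (closedBall_mem_nhds t hε) ?_
    (integrable_of_zero (hF t ht) (hzero t ht)) ?_ ?_ ?_ ?_).2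
  · filter_upwards [hU.mem_nhds ht] with s hs
    exact (integrable_of_zero (hF s hs) (hzero s hs)).aestronglyMeasurable
  · exact (integrable_of_zero (continuousOn_univ.1 (hF'.uncurry_left t ht))
      (hzero' t ht)).aestronglyMeasurable
  · refine ae_of_all _ fun x s hs => ?_
    by_cases hx : x ∈ K
    · simpa [hx] using hC (s, x) ⟨hs, hx⟩
    · simp [hx, hzero' s (hεU hs) x hx]
  · exact (integrable_indicator_iff hK.measurableSet).2 (integrableOn_const hK.measure_lt_top.ne)
  · exact ae_of_all _ fun x s hs => hderiv s (hεU hs) x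

end ParametricIntegral

section Slices

variable {E G : Type*} [NormedAddCommGroup E] [NormedSpace ℝ E] [NormedAddCommGroup G]
  [NormedSpace ℝ G] {U : Set ℝ} {F : ℝ → E → G} {m : WithTop ℕ∞}

theorem contDiff_slice_of_contDiffOn_prod
    (hF : ContDiffOn ℝ m (fun p : ℝ × E => F p.1 p.2) (U ×ˢ univ)) {t : ℝ} (ht : t ∈ U) :
    ContDiff ℝ m (F t) :=
  contDiffOn_univ.1 <| hF.comp (f := fun x : E => (t, x)) (contDiff_prodMk_right t).contDiffOn
    fun x _ => ⟨ht, mem_univ x⟩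

theorem hasDerivAt_left_of_contDiffOn_prod (hU : IsOpen U)
    (hF : ContDiffOn ℝ 1 (fun p : ℝ × E => F p.1 p.2) (U ×ˢ univ)) {t : ℝ} (ht : t ∈ U) (x : E) :
    HasDerivAt (fun s => F s x) (fderiv ℝ (fun p : ℝ × E => F p.1 p.2) (t, x) (1, 0)) t := by
  have hFtx : HasFDerivAt (fun p : ℝ × E => F p.1 p.2) _ (t, x) :=
    ((hF.differentiableOn one_ne_zero).differentiableAt
      ((hU.prod isOpen_univ).mem_nhds ⟨ht, mem_univ x⟩)).hasFDerivAt
  exact hFtx.comp_hasDerivAt t ((hasDerivAt_id t).prodMk (hasDerivAt_const t x))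

theorem continuousOn_deriv_left_of_contDiffOn_prod (hU : IsOpen U)
    (hF : ContDiffOn ℝ 1 (fun p : ℝ × E => F p.1 p.2) (U ×ˢ univ)) :
    ContinuousOn (fun p : ℝ × E => deriv (fun s => F s p.2) p.1) (U ×ˢ univ) :=
  ((hF.continuousOn_fderiv_of_isOpen (hU.prod isOpen_univ) le_rfl).clm_apply
    continuousOn_const).congr fun p hp =>
      (hasDerivAt_left_of_contDiffOn_prod hU hF hp.1 p.2).deriv

end Slices

section FDeriv

variable {E G : Type*} [NormedAddCommGroup E] [NormedSpace ℝ E] [NormedAddCommGroup G]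
  [NormedSpace ℝ G]

theorem contDiff_fderiv_apply_const {g : E → G} {m k : WithTop ℕ∞} (hg : ContDiff ℝ m g)
    (hkm : k + 1 ≤ m) (v : E) : ContDiff ℝ k fun y => fderiv ℝ g y v :=
  (hg.fderiv_right hkm).clm_apply contDiff_const

theorem integral_mul_fderiv_eq_neg_fderiv_mul_of_hasCompactSupport [FiniteDimensional ℝ E]
    [MeasurableSpace E] [BorelSpace E] {μ : Measure E} [μ.IsAddHaarMeasure] {φ u : E → ℝ}
    (hφ : ContDiff ℝ 1 φ) (hφc : HasCompactSupport φ) (hu : ContDiff ℝ 1 u) (v : E) :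
    ∫ x, φ x * fderiv ℝ u x v ∂μ = -∫ x, fderiv ℝ φ x v * u x ∂μ := by
  have hφ' := (contDiff_fderiv_apply_const hφ (zero_add 1).le v).continuous
  have hu' := (contDiff_fderiv_apply_const hu (zero_add 1).le v).continuous
  exact integral_mul_fderiv_eq_neg_fderiv_mul_of_integrable
    ((hφ'.mul hu.continuous).integrable_of_hasCompactSupport
      (hφc.fderiv_apply (𝕜 := ℝ) v).mul_right)
    ((hφ.continuous.mul hu').integrable_of_hasCompactSupport hφc.mul_right)
    ((hφ.continuous.mul hu.continuous).integrable_of_hasCompactSupport hφc.mul_right)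
    (fun x _ => hφ.differentiable one_ne_zero x) (fun x _ => hu.differentiable one_ne_zero x)

end FDeriv

section Laplacian

open scoped Laplacian Gradient InnerProductSpace

variable {E : Type*} [NormedAddCommGroup E] [InnerProductSpace ℝ E] [FiniteDimensional ℝ E]
  {G : Type*} [NormedAddCommGroup G] [NormedSpace ℝ G]

theorem laplacian_eq_sum_fderiv_fderiv_apply {ι : Type*} [Fintype ι] (b : OrthonormalBasis ι ℝ E)
    {g : E → G} (hg : ContDiff ℝ 2 g) (x : E) :
    Δ g x = ∑ i, fderiv ℝ (fun y => fderiv ℝ g y (b i)) x (b i) := by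
  have hg' : DifferentiableAt ℝ (fderiv ℝ g) x :=
    (hg.fderiv_right one_add_one_eq_two.le).differentiable one_ne_zero x
  simp [InnerProductSpace.laplacian_eq_iteratedFDeriv_orthonormalBasis g b,
    iteratedFDeriv_two_apply, fderiv_clm_apply hg' (differentiableAt_const _)]

theorem heatLap_eq_laplacian {n : ℕ} {g : EuclideanSpace ℝ (Fin n) → ℝ} (hg : ContDiff ℝ 2 g) :
    heatLap g = Δ g := by
  ext x
  simp [heatLap, laplacian_eq_sum_fderiv_fderiv_apply (EuclideanSpace.basisFun (Fin n) ℝ) hg]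

theorem continuous_laplacian {g : E → G} (hg : ContDiff ℝ 2 g) : Continuous (Δ g) := by
  rw [InnerProductSpace.laplacian_eq_iteratedFDeriv_stdOrthonormalBasis]
  have := hg.continuous_iteratedFDeriv le_rfl
  fun_prop

theorem support_laplacian_subset (g : E → G) : Function.support (Δ g) ⊆ tsupport g := by
  intro x hx
  by_contra hxg
  have hg0 : iteratedFDeriv ℝ 2 g x = 0 :=
    image_eq_zero_of_notMem_tsupport fun h => hxg (tsupport_iteratedFDeriv_subset 2 h)
  exact hx (by simp [InnerProductSpace.laplacian_eq_iteratedFDeriv_stdOrthonormalBasis, hg0])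

theorem laplacian_sq {g : E → ℝ} (hg : ContDiff ℝ 2 g) (x : E) :
    Δ (fun y => g y ^ 2) x = 2 * g x * Δ g x + 2 * ‖∇ g x‖ ^ 2 := by
  set b := stdOrthonormalBasis ℝ E
  have hd : Differentiable ℝ g := hg.differentiable two_ne_zero
  have fderiv_sq (v : E) :
      (fun y => fderiv ℝ (fun y => g y ^ 2) y v) = fun y => 2 * g y * fderiv ℝ g y v := by
    ext y
    simp [((hd y).hasFDerivAt.pow 2).fderiv]
  have fderiv_fderiv_sq (v : E) : fderiv ℝ (fun y => fderiv ℝ (fun y => g y ^ 2) y v) x v =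
      2 * g x * fderiv ℝ (fun y => fderiv ℝ g y v) x v + 2 * fderiv ℝ g x v ^ 2 := by
    have hd' : Differentiable ℝ fun y => fderiv ℝ g y v :=
      (contDiff_fderiv_apply_const hg one_add_one_eq_two.le v).differentiable one_ne_zero
    rw [fderiv_sq, (((hd x).hasFDerivAt.const_mul 2).fun_mul (hd' x).hasFDerivAt).fderiv]
    simp only [add_apply, smul_apply, smul_eq_mul]
    ring
  have norm_gradient_sq : ‖∇ g x‖ ^ 2 = ∑ i, fderiv ℝ g x (b i) ^ 2 := by
    rw [← b.sum_sq_norm_inner_left (∇ g x)]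
    simp [gradient]
  simp only [laplacian_eq_sum_fderiv_fderiv_apply b (hg.pow 2),
    laplacian_eq_sum_fderiv_fderiv_apply b hg, fderiv_fderiv_sq, norm_gradient_sq,
    Finset.sum_add_distrib, Finset.mul_sum]

theorem integral_mul_laplacian_eq_integral_laplacian_mul [MeasurableSpace E] [BorelSpace E]
    {μ : Measure E} [μ.IsAddHaarMeasure] {φ u : E → ℝ} (hφ : ContDiff ℝ 2 φ)
    (hφc : HasCompactSupport φ) (hu : ContDiff ℝ 2 u) :
    ∫ x, φ x * Δ u x ∂μ = ∫ x, Δ φ x * u x ∂μ := by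
  set b := stdOrthonormalBasis ℝ E
  have contDiff_fderiv {g : E → ℝ} (hg : ContDiff ℝ 2 g) (v : E) :
      ContDiff ℝ 1 fun y => fderiv ℝ g y v :=
    contDiff_fderiv_apply_const hg one_add_one_eq_two.le v
  have continuous_fderiv_fderiv {g : E → ℝ} (hg : ContDiff ℝ 2 g) (v : E) :
      Continuous fun x => fderiv ℝ (fun y => fderiv ℝ g y v) x v :=
    (contDiff_fderiv_apply_const (contDiff_fderiv hg v) (zero_add 1).le v).continuous
  simp only [laplacian_eq_sum_fderiv_fderiv_apply b hφ, laplacian_eq_sum_fderiv_fderiv_apply b hu,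
    Finset.mul_sum, Finset.sum_mul]
  rw [integral_finsetSum, integral_finsetSum]
  · refine Finset.sum_congr rfl fun i _ => ?_
    rw [integral_mul_fderiv_eq_neg_fderiv_mul_of_hasCompactSupport (hφ.of_le one_le_two) hφc
        (contDiff_fderiv hu _),
      integral_mul_fderiv_eq_neg_fderiv_mul_of_hasCompactSupport (contDiff_fderiv hφ _)
        (hφc.fderiv_apply (𝕜 := ℝ) _) (hu.of_le one_le_two), neg_neg]
  · exact fun i _ => ((continuous_fderiv_fderiv hφ _).mul
      hu.continuous).integrable_of_hasCompactSupport
        ((hφc.fderiv_apply (𝕜 := ℝ) _).fderiv_apply (𝕜 := ℝ) _).mul_right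
  · exact fun i _ => (hφ.continuous.mul
      (continuous_fderiv_fderiv hu _)).integrable_of_hasCompactSupport hφc.mul_right

end Laplacian

section WeightedIntegral

variable {X : Type*} [MeasurableSpace X] {μ : Measure X} {S : Set X} {ψ g : X → ℝ}

theorem setIntegral_le_integral_mul (hS : MeasurableSet S) (hψ₀ : ∀ x, 0 ≤ ψ x)
    (hψ₁ : ∀ x ∈ S, 1 ≤ ψ x) (hg : ∀ x, 0 ≤ g x) (hψg : Integrable (fun x => ψ x * g x) μ) :
    ∫ x in S, g x ∂μ ≤ ∫ x, ψ x * g x ∂μ :=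
  calc ∫ x in S, g x ∂μ ≤ ∫ x in S, ψ x * g x ∂μ :=
        integral_mono_of_nonneg (ae_of_all _ hg) hψg.integrableOn <|
          (ae_restrict_mem hS).mono fun x hx => le_mul_of_one_le_left (hg x) (hψ₁ x hx)
    _ ≤ ∫ x, ψ x * g x ∂μ :=
        setIntegral_le_integral hψg (ae_of_all _ fun x => mul_nonneg (hψ₀ x) (hg x))

theorem integral_mul_le_mul_setIntegral {A : ℝ} (hψS : Function.support ψ ⊆ S)
    (hψA : ∀ x, ψ x ≤ A) (hg : ∀ x, 0 ≤ g x) (hgS : IntegrableOn g S μ)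
    (hψg : Integrable (fun x => ψ x * g x) μ) :
    ∫ x, ψ x * g x ∂μ ≤ A * ∫ x in S, g x ∂μ := by
  have hzero : ∀ x ∉ S, ψ x * g x = 0 := fun x hx => by
    simp [Function.notMem_support.1 fun h => hx (hψS h)]
  rw [← integral_const_mul, ← setIntegral_eq_integral_of_forall_compl_eq_zero hzero]
  exact setIntegral_mono hψg.integrableOn (hgS.const_mul A) fun x =>
    mul_le_mul_of_nonneg_right (hψA x) (hg x)

theorem tendsto_integral_zero_of_lintegral_ofReal {ι : Type*} {l : Filter ι} {F : ι → X → ℝ}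
    (hF : ∀ i x, 0 ≤ F i x)
    (h : Tendsto (fun i => ∫⁻ x, ENNReal.ofReal (F i x) ∂μ) l (nhds 0)) :
    Tendsto (fun i => ∫ x, F i x ∂μ) l (nhds 0) := by
  refine squeeze_zero_norm (fun i => norm_integral_le_lintegral_norm (F i)) ?_
  simpa only [Function.comp_def, Real.norm_of_nonneg (hF _ _), ENNReal.toReal_zero] using
    (ENNReal.tendsto_toReal ENNReal.zero_ne_top).comp h

end WeightedIntegral

section RightLimit

theorem eventually_le_of_tendsto_nhdsGT_of_deriv_nonpos {h : ℝ → ℝ} {a b : ℝ}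
    (hlim : Tendsto h (nhdsWithin a (Ioi a)) (nhds b))
    (hdiff : ∀ᶠ t in nhdsWithin a (Ioi a), DifferentiableAt ℝ h t)
    (hderiv : ∀ᶠ t in nhdsWithin a (Ioi a), deriv h t ≤ 0) :
    ∀ᶠ t in nhdsWithin a (Ioi a), h t ≤ b := by
  obtain ⟨c, hac, hc⟩ := (nhdsGT_basis a).eventually_iff.1 (hdiff.and hderiv)
  have hanti : AntitoneOn h (Ioo a c) := by
    refine antitoneOn_of_deriv_nonpos (convex_Ioo a c)
      (fun t ht => (hc ht).1.continuousAt.continuousWithinAt) ?_ ?_ <;> rw [interior_Ioo]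
    exacts [fun t ht => (hc ht).1.differentiableWithinAt, fun t ht => (hc ht).2]
  filter_upwards [Ioo_mem_nhdsGT hac] with t ht
  refine ge_of_tendsto hlim ?_
  filter_upwards [Ioo_mem_nhdsGT ht.1] with s hs
  exact hanti ⟨hs.1, hs.2.trans ht.2⟩ ht hs.2.le

theorem eventually_le_mul_pow_succ_of_deriv_le {e : ℝ → ℝ} {C : ℝ} (hC : 0 ≤ C) {k : ℕ}
    (hlim : Tendsto e (nhdsWithin 0 (Ioi 0)) (nhds 0))
    (hdiff : ∀ᶠ t in nhdsWithin 0 (Ioi 0), DifferentiableAt ℝ e t)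
    (hderiv : ∀ᶠ t in nhdsWithin 0 (Ioi 0), deriv e t ≤ C * t ^ k) :
    ∀ᶠ t in nhdsWithin 0 (Ioi 0), e t ≤ C * t ^ (k + 1) := by
  have hpow (t : ℝ) :
      HasDerivAt (fun t => C * t ^ (k + 1)) (C * ((k + 1 : ℕ) * t ^ k)) t := by
    simpa using (hasDerivAt_pow (k + 1) t).const_mul C
  have hpow_lim : Tendsto (fun t : ℝ => C * t ^ (k + 1)) (nhdsWithin 0 (Ioi 0)) (nhds 0) := by
    simpa using (hpow 0).continuousAt.tendsto.mono_left nhdsWithin_le_nhds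
  have hle := eventually_le_of_tendsto_nhdsGT_of_deriv_nonpos
    (h := fun t => e t - C * t ^ (k + 1)) (b := 0) (by simpa using hlim.sub hpow_lim)
    (hdiff.mono fun t ht => ht.sub (hpow t).differentiableAt) ?_
  · exact hle.mono fun t ht => sub_nonpos.1 ht
  filter_upwards [hdiff, hderiv, self_mem_nhdsWithin] with t hdt het ht
  have hk : 0 ≤ C * (k * t ^ k) := by
    have := mem_Ioi.1 ht
    positivity
  rw [(hdt.hasDerivAt.fun_sub (hpow t)).deriv]
  push_cast
  linarith

theorem isLittleO_rpow_rpow_nhdsGT_zero {p q : ℝ} (hpq : p < q) :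
    (fun t : ℝ => t ^ q) =o[nhdsWithin 0 (Ioi 0)] fun t => t ^ p := by
  have hlim : Tendsto (fun t : ℝ => t ^ (q - p)) (nhdsWithin 0 (Ioi 0)) (nhds 0) := by
    simpa [(sub_pos.2 hpq).ne'] using (Real.continuousAt_rpow_const 0 (q - p)
      (Or.inr (sub_pos.2 hpq).le)).tendsto.mono_left nhdsWithin_le_nhds
  refine (isLittleO_iff_tendsto' ?_).2 (hlim.congr' ?_)
  · filter_upwards [self_mem_nhdsWithin] with t ht h
    exact absurd h (Real.rpow_pos_of_pos ht p).ne'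
  · filter_upwards [self_mem_nhdsWithin] with t ht
    exact Real.rpow_sub ht q p

end RightLimit

section HeatSubsolution

open scoped Laplacian InnerProductSpace

variable {E : Type*} [NormedAddCommGroup E] [InnerProductSpace ℝ E] [FiniteDimensional ℝ E]

/-- Nonnegative classical subsolutions of the heat equation on `E`, over the set `U` of times. The
function is required to be `C²` jointly in time and space, so that `deriv` and `Δ` are the genuine
derivatives at interior times. -/
structure IsNonnegHeatSubsolutionOn (f : ℝ → E → ℝ) (U : Set ℝ) : Prop where
  contDiffOn : ContDiffOn ℝ 2 (fun p : ℝ × E => f p.1 p.2) (U ×ˢ univ)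
  nonneg : ∀ t ∈ U, ∀ x, 0 ≤ f t x
  deriv_le_laplacian : ∀ t ∈ U, ∀ x, deriv (fun s => f s x) t ≤ Δ (f t) x

namespace IsNonnegHeatSubsolutionOn

variable {f : ℝ → E → ℝ} {U : Set ℝ} {t : ℝ} {φ : E → ℝ}

theorem contDiff (hf : IsNonnegHeatSubsolutionOn f U) (ht : t ∈ U) : ContDiff ℝ 2 (f t) :=
  contDiff_slice_of_contDiffOn_prod hf.contDiffOn ht

theorem continuous_sq (hf : IsNonnegHeatSubsolutionOn f U) (ht : t ∈ U) :
    Continuous fun x => f t x ^ 2 :=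
  (hf.contDiff ht).continuous.pow 2

theorem two_mul_mul_deriv_le_laplacian_sq (hf : IsNonnegHeatSubsolutionOn f U) (ht : t ∈ U)
    (x : E) : 2 * f t x * deriv (fun s => f s x) t ≤ Δ (fun y => f t y ^ 2) x := by
  have hft : 0 ≤ 2 * f t x := mul_nonneg zero_le_two (hf.nonneg t ht x)
  calc 2 * f t x * deriv (fun s => f s x) t ≤ 2 * f t x * Δ (f t) x :=
        mul_le_mul_of_nonneg_left (hf.deriv_le_laplacian t ht x) hft
    _ ≤ Δ (fun y => f t y ^ 2) x := by
        rw [laplacian_sq (hf.contDiff ht)]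
        exact le_add_of_nonneg_right (by positivity)

theorem continuousOn_two_mul_mul_deriv (hf : IsNonnegHeatSubsolutionOn f U) (hU : IsOpen U) :
    ContinuousOn (fun p : ℝ × E => 2 * f p.1 p.2 * deriv (fun s => f s p.2) p.1) (U ×ˢ univ) :=
  (continuousOn_const.mul hf.contDiffOn.continuousOn).mul
    (continuousOn_deriv_left_of_contDiffOn_prod hU (hf.contDiffOn.of_le one_le_two))

variable [MeasurableSpace E] [BorelSpace E] {μ : Measure E}

theorem integrable_mul_sq [IsFiniteMeasureOnCompacts μ] (hf : IsNonnegHeatSubsolutionOn f U)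
    (ht : t ∈ U) (hφ : Continuous φ) (hφc : HasCompactSupport φ) :
    Integrable (fun x => φ x * f t x ^ 2) μ :=
  (hφ.mul (hf.continuous_sq ht)).integrable_of_hasCompactSupport hφc.mul_right

theorem integrableOn_sq_ball [IsFiniteMeasureOnCompacts μ] (hf : IsNonnegHeatSubsolutionOn f U)
    (ht : t ∈ U) (c : E) (r : ℝ) : IntegrableOn (fun x => f t x ^ 2) (ball c r) μ :=
  ((hf.continuous_sq ht).continuousOn.integrableOn_compact
    (isCompact_closedBall c r)).mono_set ball_subset_closedBall

theorem hasDerivAt_integral_mul_sq [IsFiniteMeasureOnCompacts μ]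
    (hf : IsNonnegHeatSubsolutionOn f U) (hU : IsOpen U) (ht : t ∈ U) (hφ : Continuous φ)
    (hφc : HasCompactSupport φ) :
    HasDerivAt (fun s => ∫ x, φ x * f s x ^ 2 ∂μ)
      (∫ x, φ x * (2 * f t x * deriv (fun s => f s x) t) ∂μ) t := by
  refine hasDerivAt_integral_of_eq_zero_off_compact
    (F' := fun s x => φ x * (2 * f s x * deriv (fun r => f r x) s)) hU hφc
    (fun s hs => hφ.mul (hf.continuous_sq hs))
    ((hφ.comp continuous_snd).continuousOn.mul (hf.continuousOn_two_mul_mul_deriv hU))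
    (fun s hs x => ?_) (fun s _ x hx => by simp [image_eq_zero_of_notMem_tsupport hx]) ht
  have hd := (hasDerivAt_left_of_contDiffOn_prod hU
    (hf.contDiffOn.of_le one_le_two) hs x).differentiableAt.hasDerivAt
  simpa using (hd.fun_pow 2).const_mul (φ x)

theorem deriv_integral_mul_sq_le [μ.IsAddHaarMeasure] (hf : IsNonnegHeatSubsolutionOn f U)
    (hU : IsOpen U) (ht : t ∈ U) (hφ : ContDiff ℝ 2 φ) (hφc : HasCompactSupport φ)
    (hφ₀ : ∀ x, 0 ≤ φ x) :
    deriv (fun s => ∫ x, φ x * f s x ^ 2 ∂μ) t ≤ ∫ x, Δ φ x * f t x ^ 2 ∂μ := by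
  have hsq : ContDiff ℝ 2 fun x => f t x ^ 2 := (hf.contDiff ht).pow 2
  have hderiv : Continuous fun x => 2 * f t x * deriv (fun s => f s x) t :=
    continuousOn_univ.1 ((hf.continuousOn_two_mul_mul_deriv hU).uncurry_left t ht
      (f := fun s x => 2 * f s x * deriv (fun r => f r x) s))
  calc deriv (fun s => ∫ x, φ x * f s x ^ 2 ∂μ) t
      = ∫ x, φ x * (2 * f t x * deriv (fun s => f s x) t) ∂μ :=
        (hf.hasDerivAt_integral_mul_sq hU ht hφ.continuous hφc).deriv
    _ ≤ ∫ x, φ x * Δ (fun y => f t y ^ 2) x ∂μ :=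
        integral_mono
          ((hφ.continuous.mul hderiv).integrable_of_hasCompactSupport hφc.mul_right)
          ((hφ.continuous.mul (continuous_laplacian hsq)).integrable_of_hasCompactSupport
            hφc.mul_right)
          fun x => mul_le_mul_of_nonneg_left (hf.two_mul_mul_deriv_le_laplacian_sq ht x) (hφ₀ x)
    _ = ∫ x, Δ φ x * f t x ^ 2 ∂μ :=
        integral_mul_laplacian_eq_integral_laplacian_mul hφ hφc hsq

theorem exists_integral_mul_sq_le [IsFiniteMeasureOnCompacts μ]
    (hf : IsNonnegHeatSubsolutionOn f U) (hφ : Continuous φ) (hφc : HasCompactSupport φ) {c : E}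
    {r : ℝ} (hφr : Function.support φ ⊆ ball c r) :
    ∃ L ≥ 0, ∀ t ∈ U, ∫ x, φ x * f t x ^ 2 ∂μ ≤ L * ∫ x in ball c r, f t x ^ 2 ∂μ := by
  obtain ⟨L, hL⟩ := hφc.exists_bound_of_continuous hφ
  exact ⟨L, (norm_nonneg _).trans (hL 0), fun t ht => integral_mul_le_mul_setIntegral hφr
    (fun x => (le_abs_self _).trans (hL x)) (fun x => sq_nonneg _)
    (hf.integrableOn_sq_ball ht c r) (hf.integrable_mul_sq ht hφ hφc)⟩

theorem tendsto_integral_mul_sq_zero [IsFiniteMeasureOnCompacts μ]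
    (hf : IsNonnegHeatSubsolutionOn f U) {l : Filter ℝ} (hUl : U ∈ l) (hφ : Continuous φ)
    (hφc : HasCompactSupport φ) (hφ₀ : ∀ x, 0 ≤ φ x) {c : E} {r : ℝ}
    (hφr : Function.support φ ⊆ ball c r)
    (hlim : Tendsto (fun t => ∫ x in ball c r, f t x ^ 2 ∂μ) l (nhds 0)) :
    Tendsto (fun t => ∫ x, φ x * f t x ^ 2 ∂μ) l (nhds 0) := by
  obtain ⟨L, -, hL⟩ := hf.exists_integral_mul_sq_le (μ := μ) hφ hφc hφr
  exact squeeze_zero' (Eventually.of_forall fun t => integral_nonneg fun x =>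
    mul_nonneg (hφ₀ x) (sq_nonneg _)) (mem_of_superset hUl hL) (by simpa using hlim.const_mul L)

variable [μ.IsAddHaarMeasure] {c : E}

theorem isBigO_integral_mul_sq_pow_succ (hf : IsNonnegHeatSubsolutionOn f U) (hU : IsOpen U)
    (hU₀ : U ∈ nhdsWithin 0 (Ioi 0)) (hφ : ContDiff ℝ 2 φ) (hφc : HasCompactSupport φ)
    (hφ₀ : ∀ x, 0 ≤ φ x) {r : ℝ} (hφr : tsupport φ ⊆ ball c r) {k : ℕ}
    (hlim : Tendsto (fun t => ∫ x in ball c r, f t x ^ 2 ∂μ) (nhdsWithin 0 (Ioi 0)) (nhds 0))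
    (hO : (fun t => ∫ x in ball c r, f t x ^ 2 ∂μ) =O[nhdsWithin 0 (Ioi 0)] fun t => t ^ k) :
    (fun t => ∫ x, φ x * f t x ^ 2 ∂μ) =O[nhdsWithin 0 (Ioi 0)] fun t => t ^ (k + 1) := by
  have norm_pow_of_mem (j : ℕ) {t : ℝ} (ht : t ∈ Ioi (0 : ℝ)) : ‖t ^ j‖ = t ^ j :=
    Real.norm_of_nonneg (pow_nonneg (le_of_lt ht) j)
  obtain ⟨C, hC, hbound⟩ := hO.exists_nonneg
  obtain ⟨L, hL, hΔ⟩ := hf.exists_integral_mul_sq_le (μ := μ) (continuous_laplacian hφ)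
    (hφc.mono' (support_laplacian_subset φ)) ((support_laplacian_subset φ).trans hφr)
  have hderiv : ∀ᶠ t in nhdsWithin 0 (Ioi 0),
      deriv (fun s => ∫ x, φ x * f s x ^ 2 ∂μ) t ≤ L * C * t ^ k := by
    filter_upwards [hU₀, hbound.bound, self_mem_nhdsWithin] with t ht hCt ht₀
    calc deriv (fun s => ∫ x, φ x * f s x ^ 2 ∂μ) t
        ≤ ∫ x, Δ φ x * f t x ^ 2 ∂μ := hf.deriv_integral_mul_sq_le hU ht hφ hφc hφ₀
      _ ≤ L * ∫ x in ball c r, f t x ^ 2 ∂μ := hΔ t ht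
      _ ≤ L * (C * t ^ k) := mul_le_mul_of_nonneg_left
          ((le_abs_self _).trans (norm_pow_of_mem k ht₀ ▸ hCt)) hL
      _ = L * C * t ^ k := (mul_assoc _ _ _).symm
  have hle := eventually_le_mul_pow_succ_of_deriv_le (mul_nonneg hL hC)
    (hf.tendsto_integral_mul_sq_zero hU₀ hφ.continuous hφc hφ₀
      ((subset_tsupport φ).trans hφr) hlim)
    (mem_of_superset hU₀ fun t ht =>
      (hf.hasDerivAt_integral_mul_sq hU ht hφ.continuous hφc).differentiableAt) hderiv
  refine IsBigO.of_bound (L * C) ?_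
  filter_upwards [hle, self_mem_nhdsWithin] with t ht ht₀
  rwa [norm_pow_of_mem _ ht₀,
    Real.norm_of_nonneg (integral_nonneg fun x => mul_nonneg (hφ₀ x) (sq_nonneg _))]

theorem isBigO_setIntegral_ball_sq_pow_succ (hf : IsNonnegHeatSubsolutionOn f U) (hU : IsOpen U)
    (hU₀ : U ∈ nhdsWithin 0 (Ioi 0)) {r ρ : ℝ} (hr : 0 < r) (hrρ : r < ρ) {k : ℕ}
    (hlim : Tendsto (fun t => ∫ x in ball c ρ, f t x ^ 2 ∂μ) (nhdsWithin 0 (Ioi 0)) (nhds 0))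
    (hO : (fun t => ∫ x in ball c ρ, f t x ^ 2 ∂μ) =O[nhdsWithin 0 (Ioi 0)] fun t => t ^ k) :
    (fun t => ∫ x in ball c r, f t x ^ 2 ∂μ) =O[nhdsWithin 0 (Ioi 0)] fun t => t ^ (k + 1) := by
  let φ : ContDiffBump c := ⟨r, (r + ρ) / 2, hr, by linarith⟩
  have hφρ : tsupport φ ⊆ ball c ρ :=
    φ.tsupport_eq.trans_subset (closedBall_subset_ball (show (r + ρ) / 2 < ρ by linarith))
  refine .trans (.of_bound' ?_) <| hf.isBigO_integral_mul_sq_pow_succ hU hU₀ φ.contDiff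
    φ.hasCompactSupport (fun _ => φ.nonneg) hφρ hlim hO
  filter_upwards [hU₀] with t ht
  rw [Real.norm_of_nonneg (integral_nonneg fun x => sq_nonneg _)]
  exact (setIntegral_le_integral_mul measurableSet_ball (fun x => φ.nonneg)
    (fun x hx => (φ.one_of_mem_closedBall (ball_subset_closedBall hx)).ge)
    (fun x => sq_nonneg _) (hf.integrable_mul_sq ht φ.continuous φ.hasCompactSupport)).trans
      (le_abs_self _)

theorem isBigO_setIntegral_ball_sq_pow (hf : IsNonnegHeatSubsolutionOn f U) (hU : IsOpen U)
    (hU₀ : U ∈ nhdsWithin 0 (Ioi 0))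
    (hlim : ∀ R > 0,
      Tendsto (fun t => ∫ x in ball c R, f t x ^ 2 ∂μ) (nhdsWithin 0 (Ioi 0)) (nhds 0))
    (k : ℕ) {R : ℝ} (hR : 0 < R) :
    (fun t => ∫ x in ball c R, f t x ^ 2 ∂μ) =O[nhdsWithin 0 (Ioi 0)] fun t => t ^ k := by
  induction k generalizing R with
  | zero => simpa using (hlim R hR).isBigO_one ℝ
  | succ k ih =>
    have hR' : 0 < R + 1 := by positivity
    exact hf.isBigO_setIntegral_ball_sq_pow_succ hU hU₀ hR (lt_add_one R) (hlim _ hR') (ih hR')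

end IsNonnegHeatSubsolutionOn

theorem heat_subsolution_L2_vanishing_order_general [MeasurableSpace E] [BorelSpace E]
    {μ : Measure E} [μ.IsAddHaarMeasure] {c : E} {f : ℝ → E → ℝ} {U : Set ℝ}
    (hf : IsNonnegHeatSubsolutionOn f U) (hU : IsOpen U) (hU₀ : U ∈ nhdsWithin 0 (Ioi 0))
    (hf_init : ∀ R > 0, Tendsto (fun t => ∫⁻ x in ball c R, ENNReal.ofReal (f t x ^ 2) ∂μ)
      (nhdsWithin 0 (Ioi 0)) (nhds 0))
    {R : ℝ} (hR : 0 < R) (p : ℝ) :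
    (fun t => ∫ x in ball c R, f t x ^ 2 ∂μ) =o[nhdsWithin 0 (Ioi 0)] fun t => t ^ p := by
  obtain ⟨k, hk⟩ := exists_nat_gt p
  refine IsBigO.trans_isLittleO ?_ (isLittleO_rpow_rpow_nhdsGT_zero hk)
  simpa only [Real.rpow_natCast] using hf.isBigO_setIntegral_ball_sq_pow hU hU₀
    (fun r hr => tendsto_integral_zero_of_lintegral_ofReal (fun _ _ => sq_nonneg _)
      (hf_init r hr)) k hR

end HeatSubsolution

theorem isNonnegHeatSubsolutionOn_of_heatLap {n : ℕ} {f : ℝ → EuclideanSpace ℝ (Fin n) → ℝ}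
    {U : Set ℝ} (hf : ContDiffOn ℝ 2 (fun p : ℝ × EuclideanSpace ℝ (Fin n) => f p.1 p.2)
      (U ×ˢ univ)) (hf_nonneg : ∀ t ∈ U, ∀ x, 0 ≤ f t x)
    (hf_subsol : ∀ t ∈ U, ∀ x, deriv (fun s => f s x) t ≤ heatLap (f t) x) :
    IsNonnegHeatSubsolutionOn f U where
  contDiffOn := hf
  nonneg := hf_nonneg
  deriv_le_laplacian t ht x :=
    heatLap_eq_laplacian (contDiff_slice_of_contDiffOn_prod hf ht) ▸ hf_subsol t ht x

/-- **Vanishing order of the local `L²` norm.** For a nonnegative smooth subsolution of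
the heat equation on `ℝⁿ × (0,1]` with zero initial data in `L²_loc`, locally finite
space-time `L²` integral and locally bounded spatial `L²` norms, the local spatial `L²`
integral is `o(tᵐ)` as `t → 0⁺` for every `m ≥ 2`; in particular
`(1/t) ∫_{B(0,R)} f(t)² → 0`. -/
theorem heat_subsolution_L2_vanishing_order {n : ℕ}
    (f : ℝ → EuclideanSpace ℝ (Fin n) → ℝ)
    (hf_smooth : ContDiffOn ℝ (⊤ : ℕ∞)
      (fun p : ℝ × EuclideanSpace ℝ (Fin n) => f p.1 p.2) (Set.Ioc (0:ℝ) 1 ×ˢ Set.univ))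
    (hf_nonneg : ∀ t ∈ Set.Ioc (0:ℝ) 1, ∀ x, 0 ≤ f t x)
    (hf_subsol : ∀ t ∈ Set.Ioc (0:ℝ) 1, ∀ x, deriv (fun s => f s x) t ≤ heatLap (f t) x)
    (hf_init : ∀ R > (0:ℝ),
      Tendsto (fun t => ∫⁻ x in ball (0 : EuclideanSpace ℝ (Fin n)) R,
        ENNReal.ofReal ((f t x) ^ 2)) (nhdsWithin 0 (Set.Ioi 0)) (nhds 0))
    (hf_loc_int : ∀ r > (0:ℝ),
      ∫⁻ t in Set.Ioc (0:ℝ) 1, ∫⁻ x in ball (0 : EuclideanSpace ℝ (Fin n)) r,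
        ENNReal.ofReal ((f t x) ^ 2) < ⊤)
    (hf_loc_sup : ∀ r > (0:ℝ), ∃ M : ℝ, ∀ s ∈ Set.Ioo (0:ℝ) 1,
      (∫ x in ball (0 : EuclideanSpace ℝ (Fin n)) r, (f s x) ^ 2) ≤ M) :
    ∀ R > (0:ℝ), ∀ m : ℝ, 2 ≤ m →
      ((fun t => ∫ x in ball (0 : EuclideanSpace ℝ (Fin n)) R, (f t x) ^ 2)
        =o[nhdsWithin (0:ℝ) (Set.Ioi 0)] fun t => t ^ m) ∧
      Tendsto (fun t => (1 / t) * ∫ x in ball (0 : EuclideanSpace ℝ (Fin n)) R, (f t x) ^ 2)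
        (nhdsWithin (0:ℝ) (Set.Ioi 0)) (nhds 0) := by
  intro R hR m _
  have hsub : IsNonnegHeatSubsolutionOn f (Ioo 0 1) := isNonnegHeatSubsolutionOn_of_heatLap
    ((hf_smooth.of_le (WithTop.coe_le_coe.2 le_top)).mono
      (prod_mono Ioo_subset_Ioc_self subset_rfl))
    (fun t ht => hf_nonneg t (Ioo_subset_Ioc_self ht))
    (fun t ht => hf_subsol t (Ioo_subset_Ioc_self ht))
  have hlittleO (p : ℝ) := heat_subsolution_L2_vanishing_order_general hsub isOpen_Ioo
    (Ioo_mem_nhdsGT one_pos) hf_init hR p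
  exact ⟨hlittleO m, by simpa [div_eq_inv_mul] using (hlittleO 1).tendsto_div_nhds_zero⟩
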